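/- arXiv:1610.09502 — 2 statements merged into one kernel-verified Lean document; each statement's English description precedes it below -/
import Mathlib

section
/- Let 0 ≤ s < m and 0 ≤ r < n be integers, and let S be a uniformly random n-element subset of {1,…,m+n}. For integers i, k with 0 ≤ i ≤ m−s−1 and 0 ≤ k ≤ n−r−1, the probability that A_s(S) = k and B_r(S) = i equals C(s+k, s) · C(r+i, r) · C(m+n−s−r−i−k−2, n−r−k−1) / C(m+n, n), where C(a, b) denotes the binomial coefficient. (Equivalently, the number of n-element subsets S of {1,…,m+n} with A_s(S) = k and B_r(S) = i equals C(s+k, s) · C(r+i, r) · C(m+n−s−r−i−k−2, n−r−k−1).) -/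
open Finset

/-- The `j`-th smallest element (1-indexed) of a finite set of naturals. -/
def nthSmallest (T : Finset ℕ) (j : ℕ) : ℕ :=
  (T.sort (· ≤ ·)).getD (j - 1) 0

/-- Exceedance statistic: for an `n`-element subset `S` of `{1,…,m+n}` (the ranks of the
`Y`-sample), the number of elements of `S` greater than `X_{(m-s)}`, the `(m-s)`-th smallest
element of the complement of `S`. -/
def Aexc (m n s : ℕ) (S : Finset ℕ) : ℕ :=
  (S.filter fun y => nthSmallest (Finset.Icc 1 (m + n) \ S) (m - s) < y).card

/-- Precedence statistic: the number of elements of the complement of `S` smaller than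
`Y_{(r+1)}`, the `(r+1)`-th smallest element of `S`. -/
def Bprec (m n r : ℕ) (S : Finset ℕ) : ℕ :=
  ((Finset.Icc 1 (m + n) \ S).filter fun x => x < nthSmallest S (r + 1)).card

/-!
The value of `B_r` determines `Y_{(r+1)}` and the value of `A_s` determines `X_{(m-s)}`: counting
the ranks up to each of these order statistics gives `Y_{(r+1)} = r + B_r + 1` and
`X_{(m-s)} = m + n - s - A_s`. Hence `A_s = k` and `B_r = i` say that `p = r + i + 1` is in `S` with
`r` elements of `S` below it, and `q = m + n - s - k` is not in `S` with `k` elements of `S` above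
it. In the case at hand `p < q`, so such an `S` consists of `p` and independent choices of `r`
elements below `p`, `n - r - k - 1` elements strictly between `p` and `q`, and `k` elements
above `q`.
-/

section Counting

variable {α ι : Type*}

theorem card_filter_powerset_card_fiber_eq [Fintype ι] [DecidableEq ι]
    (f : α → ι) (U : Finset α) (c : ι → ℕ) :
    #{S ∈ U.powerset | ∀ j, #{x ∈ S | f x = j} = c j} =
      ∏ j, (#{x ∈ U | f x = j}).choose (c j) := by
  classical
  simp_rw [← card_powersetCard, ← Fintype.card_piFinset]
  have fiber_glue (g : ι → Finset α) (hg : ∀ j, g j ⊆ {x ∈ U | f x = j}) (j : ι) :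
      {x ∈ {x ∈ U | x ∈ g (f x)} | f x = j} = g j := by
    ext x
    have := @hg j x
    grind
  refine card_nbij' (fun S j ↦ {x ∈ S | f x = j}) (fun g ↦ {x ∈ U | x ∈ g (f x)}) ?_ ?_ ?_ ?_
  · intro S hS
    obtain ⟨hSU, hcard⟩ := mem_filter.1 hS
    simp only [mem_coe, Fintype.mem_piFinset, mem_powersetCard]
    exact fun j ↦ ⟨filter_subset_filter _ (mem_powerset.1 hSU), hcard j⟩
  · intro g hg
    simp only [mem_coe, Fintype.mem_piFinset, mem_powersetCard] at hg
    simp only [mem_coe, mem_filter, mem_powerset]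
    exact ⟨filter_subset _ _, fun j ↦ by rw [fiber_glue g (fun j ↦ (hg j).1), (hg j).2]⟩
  · intro S hS
    have hSU := mem_powerset.1 (mem_filter.1 hS).1
    ext x
    simpa using @hSU x
  · intro g hg
    simp only [mem_coe, Fintype.mem_piFinset, mem_powersetCard] at hg
    exact funext (fiber_glue g fun j ↦ (hg j).1)

theorem card_filter_eq_eq_one_iff [DecidableEq α] {S : Finset α} {y : α} :
    #{x ∈ S | x = y} = 1 ↔ y ∈ S := by
  rw [filter_eq']
  split_ifs with hy <;> simp [hy]

theorem card_filter_eq_eq_zero_iff [DecidableEq α] {S : Finset α} {y : α} :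
    #{x ∈ S | x = y} = 0 ↔ y ∉ S := by
  rw [filter_eq']
  split_ifs with hy <;> simp [hy]

variable [LinearOrder α] {p q x : α}

/-- The position of `x` relative to two cut points `p < q`: below `p`, at `p`, strictly between,
at `q`, or above `q`, numbered in increasing order. Its fibers are the five blocks on which a set
containing `p` but not `q` is chosen independently. -/
def cutBlock (p q x : α) : Fin 5 :=
  if x < p then 0 else if x = p then 1 else if x < q then 2 else if x = q then 3 else 4

theorem cutBlock_eq_zero_iff : cutBlock p q x = 0 ↔ x < p := by
  grind [cutBlock]

theorem cutBlock_eq_one_iff : cutBlock p q x = 1 ↔ x = p := by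
  grind [cutBlock]

theorem cutBlock_eq_two_iff : cutBlock p q x = 2 ↔ p < x ∧ x < q := by
  grind [cutBlock]

theorem cutBlock_eq_three_iff (hpq : p < q) : cutBlock p q x = 3 ↔ x = q := by
  grind [cutBlock]

theorem cutBlock_eq_four_iff (hpq : p < q) : cutBlock p q x = 4 ↔ q < x := by
  grind [cutBlock]

theorem card_cutBlock_fiber_eq_iff (hpq : p < q) (S : Finset α) (a b c : ℕ) :
    (∀ j, #{x ∈ S | cutBlock p q x = j} = ![a, 1, b, 0, c] j) ↔
      #S = a + 1 + b + c ∧ (p ∈ S ∧ #{x ∈ S | x < p} = a) ∧ q ∉ S ∧ #{x ∈ S | q < x} = c := by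
  have card_eq : #S = ∑ j, #{x ∈ S | cutBlock p q x = j} :=
    card_eq_sum_card_fiberwise fun _ _ ↦ mem_coe.2 (mem_univ _)
  have forall_fin_five (P : Fin 5 → Prop) : (∀ j, P j) ↔ P 0 ∧ P 1 ∧ P 2 ∧ P 3 ∧ P 4 :=
    ⟨fun h ↦ ⟨h 0, h 1, h 2, h 3, h 4⟩, fun h j ↦ by fin_cases j <;> simp [h]⟩
  rw [card_eq, forall_fin_five, Fin.sum_univ_five, ← card_filter_eq_eq_one_iff (y := p),
    ← card_filter_eq_eq_zero_iff (y := q)]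
  simp only [cutBlock_eq_zero_iff, cutBlock_eq_one_iff, cutBlock_eq_two_iff,
    cutBlock_eq_three_iff hpq, cutBlock_eq_four_iff hpq]
  change _ = a ∧ _ = 1 ∧ _ = b ∧ _ = 0 ∧ _ = c ↔ _
  omega

theorem card_filter_powersetCard_mem_notMem {U : Finset α} (hp : p ∈ U) (hpq : p < q)
    (a b c : ℕ) :
    #{S ∈ U.powersetCard (a + 1 + b + c) |
        (p ∈ S ∧ #{x ∈ S | x < p} = a) ∧ q ∉ S ∧ #{x ∈ S | q < x} = c} =
      (#{x ∈ U | x < p}).choose a * (#{x ∈ U | p < x ∧ x < q}).choose b *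
        (#{x ∈ U | q < x}).choose c := by
  have hpU : #{x ∈ U | x = p} = 1 := card_filter_eq_eq_one_iff.2 hp
  calc
    _ = #{S ∈ U.powerset | ∀ j, #{x ∈ S | cutBlock p q x = j} = ![a, 1, b, 0, c] j} := by
      congr 1
      ext S
      simp only [mem_filter, mem_powersetCard, mem_powerset, card_cutBlock_fiber_eq_iff hpq,
        and_assoc]
    _ = ∏ j, (#{x ∈ U | cutBlock p q x = j}).choose (![a, 1, b, 0, c] j) := by
      -- `convert` because `∀ j : Fin 5` gets a decidability instance other than the `Fintype` one.
      convert card_filter_powerset_card_fiber_eq ..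
    _ = _ := by
      rw [Fin.prod_univ_five]
      simp only [cutBlock_eq_zero_iff, cutBlock_eq_one_iff, cutBlock_eq_two_iff,
        cutBlock_eq_four_iff hpq, hpU]
      change _ * Nat.choose 1 1 * _ * Nat.choose _ 0 * _ = _
      rw [Nat.choose_self, Nat.choose_zero_right, mul_one, mul_one]
      rfl

theorem Icc_filter_lt_eq_Ico [LocallyFiniteOrder α] {a b c : α} (hcb : c ≤ b) :
    {x ∈ Icc a b | x < c} = Ico a c := by
  ext x
  grind

theorem card_filter_powersetCard_Icc_mem_notMem {N p q : ℕ} (hp : 1 ≤ p) (hpq : p < q) (hq : q ≤ N)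
    (a b c : ℕ) :
    #{S ∈ (Icc 1 N).powersetCard (a + 1 + b + c) |
        (p ∈ S ∧ #{x ∈ S | x < p} = a) ∧ q ∉ S ∧ #{x ∈ S | q < x} = c} =
      (p - 1).choose a * (q - p - 1).choose b * (N - q).choose c := by
  have below : {x ∈ Icc 1 N | x < p} = Ico 1 p := Icc_filter_lt_eq_Ico (by omega)
  have between : {x ∈ Icc 1 N | p < x ∧ x < q} = Ioo p q := by
    ext x
    grind
  have above : {x ∈ Icc 1 N | q < x} = Ioc q N := by
    ext x
    grind
  rw [card_filter_powersetCard_mem_notMem (mem_Icc.2 (by omega)) hpq, below, between, above,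
    Nat.card_Ico, Nat.card_Ioo, Nat.card_Ioc]

end Counting

section OrderStatistics

theorem toFinset_ofPred_mem {α : Type*} {T : Finset α} (hT : (Set.ofPred (· ∈ T)).Finite) :
    hT.toFinset = T := by
  ext
  simp

theorem nthSmallest_succ_eq_nth (T : Finset ℕ) (j : ℕ) :
    nthSmallest T (j + 1) = Nat.nth (· ∈ T) j := by
  have hT : (Set.ofPred (· ∈ T)).Finite := T.finite_toSet
  rw [Nat.nth_eq_getD_sort hT, toFinset_ofPred_mem]
  rfl

theorem count_mem_eq_card_filter_lt (T : Finset ℕ) (a : ℕ) :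
    Nat.count (· ∈ T) a = #{x ∈ T | x < a} := by
  rw [Nat.count_eq_card_filter_range]
  congr 1
  ext x
  simp [and_comm]

theorem nthSmallest_eq_iff {T : Finset ℕ} {j a : ℕ} (hj : 0 < j) (hjT : j ≤ #T) :
    nthSmallest T j = a ↔ a ∈ T ∧ #{x ∈ T | x < a} + 1 = j := by
  obtain ⟨j, rfl⟩ := Nat.exists_eq_add_one.2 hj
  have lt_card (hf : (Set.ofPred (· ∈ T)).Finite) : j < #hf.toFinset := by
    rw [toFinset_ofPred_mem]
    exact hjT
  rw [nthSmallest_succ_eq_nth, ← count_mem_eq_card_filter_lt, Nat.add_right_cancel_iff]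
  constructor
  · rintro rfl
    exact ⟨Nat.nth_mem j lt_card, Nat.count_nth lt_card⟩
  · rintro ⟨ha, rfl⟩
    exact Nat.nth_count ha

end OrderStatistics

section Ranks

variable {m n s r N a : ℕ} {S : Finset ℕ}

theorem card_filter_lt_add_card_sdiff_filter_lt (hS : S ⊆ Icc 1 N) (ha : a ∈ Icc 1 N) :
    #{x ∈ S | x < a} + #{x ∈ Icc 1 N \ S | x < a} + 1 = a := by
  have below_a : {x ∈ Icc 1 N | x < a} = Ico 1 a := Icc_filter_lt_eq_Ico (mem_Icc.1 ha).2
  rw [← card_union_of_disjoint (disjoint_filter_filter disjoint_sdiff), ← filter_union,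
    union_sdiff_of_subset hS, below_a, Nat.card_Ico]
  exact Nat.sub_add_cancel (mem_Icc.1 ha).1

theorem card_filter_lt_add_card_filter_gt {α : Type*} [LinearOrder α] {S : Finset α} {a : α}
    (ha : a ∉ S) : #{x ∈ S | x < a} + #{x ∈ S | a < x} = #S := by
  rw [← card_filter_add_card_filter_not (s := S) (· < a)]
  congr 2
  exact filter_congr fun x hx ↦ by grind

theorem card_Icc_sdiff (hS : S ∈ (Icc 1 (m + n)).powersetCard n) : #(Icc 1 (m + n) \ S) = m := by
  obtain ⟨hSU, hcard⟩ := mem_powersetCard.1 hS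
  rw [card_sdiff_of_subset hSU, Nat.card_Icc, hcard]
  omega

theorem nthSmallest_eq_add_Bprec (hr : r < n) (hS : S ∈ (Icc 1 (m + n)).powersetCard n) :
    nthSmallest S (r + 1) = r + Bprec m n r S + 1 := by
  obtain ⟨hSU, hcard⟩ := mem_powersetCard.1 hS
  obtain ⟨hmem, hrank⟩ := (nthSmallest_eq_iff (Nat.add_one_pos r) (hr.trans_eq hcard.symm)).1 rfl
  have below := card_filter_lt_add_card_sdiff_filter_lt hSU (hSU hmem)
  unfold Bprec
  omega

theorem nthSmallest_sdiff_add_Aexc (hs : s < m) (hS : S ∈ (Icc 1 (m + n)).powersetCard n) :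
    nthSmallest (Icc 1 (m + n) \ S) (m - s) + Aexc m n s S + s = m + n := by
  obtain ⟨hSU, hcard⟩ := mem_powersetCard.1 hS
  obtain ⟨hmem, hrank⟩ := (nthSmallest_eq_iff (Nat.sub_pos_of_lt hs)
    ((Nat.sub_le m s).trans_eq (card_Icc_sdiff hS).symm)).1 rfl
  obtain ⟨hU, hnotMem⟩ := mem_sdiff.1 hmem
  have below := card_filter_lt_add_card_sdiff_filter_lt hSU hU
  have split := card_filter_lt_add_card_filter_gt hnotMem
  unfold Aexc
  omega

theorem Bprec_eq_iff (hr : r < n) (hS : S ∈ (Icc 1 (m + n)).powersetCard n) {i : ℕ} :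
    Bprec m n r S = i ↔ r + i + 1 ∈ S ∧ #{x ∈ S | x < r + i + 1} = r := by
  have hrS : r + 1 ≤ #S := hr.trans_eq (mem_powersetCard.1 hS).2.symm
  have order_statistic := nthSmallest_eq_iff (a := r + i + 1) (Nat.add_one_pos r) hrS
  rw [nthSmallest_eq_add_Bprec hr hS] at order_statistic
  simpa using order_statistic

theorem Aexc_eq_iff (hs : s < m) (hS : S ∈ (Icc 1 (m + n)).powersetCard n) {k : ℕ} (hk : k ≤ n) :
    Aexc m n s S = k ↔ m + n - s - k ∉ S ∧ #{x ∈ S | m + n - s - k < x} = k := by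
  obtain ⟨hSU, hcard⟩ := mem_powersetCard.1 hS
  have hX := nthSmallest_sdiff_add_Aexc hs hS
  have hq : m + n - s - k ∈ Icc 1 (m + n) := mem_Icc.2 (by omega)
  have below := card_filter_lt_add_card_sdiff_filter_lt hSU hq
  calc
    Aexc m n s S = k ↔ nthSmallest (Icc 1 (m + n) \ S) (m - s) = m + n - s - k := by omega
    _ ↔ m + n - s - k ∉ S ∧ #{x ∈ Icc 1 (m + n) \ S | x < m + n - s - k} + 1 = m - s := by
      rw [nthSmallest_eq_iff (Nat.sub_pos_of_lt hs)
        ((Nat.sub_le m s).trans_eq (card_Icc_sdiff hS).symm), mem_sdiff, and_iff_right hq]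
    _ ↔ m + n - s - k ∉ S ∧ #{x ∈ S | m + n - s - k < x} = k :=
      and_congr_right fun hnotMem ↦ by
        have split := card_filter_lt_add_card_filter_gt hnotMem
        omega

end Ranks

/-- First case of Theorem 1: the null joint distribution of `(A_s, B_r)` for a uniformly
random `n`-element subset of `{1,…,m+n}`. -/
theorem sidak_joint_null_case1 (m n s r i k : ℕ) (hs : s < m) (hr : r < n)
    (hi : i ≤ m - s - 1) (hk : k ≤ n - r - 1) :
    ((((Finset.Icc 1 (m + n)).powersetCard n).filter
        (fun S => Aexc m n s S = k ∧ Bprec m n r S = i)).card : ℚ)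
        / ((m + n).choose n : ℚ)
      = ((s + k).choose s * (r + i).choose r
            * (m + n - s - r - i - k - 2).choose (n - r - k - 1) : ℚ)
        / ((m + n).choose n : ℚ) ∧
    (((Finset.Icc 1 (m + n)).powersetCard n).filter
        (fun S => Aexc m n s S = k ∧ Bprec m n r S = i)).card
      = (s + k).choose s * (r + i).choose r
          * (m + n - s - r - i - k - 2).choose (n - r - k - 1) := by
  refine (and_iff_right_of_imp fun count ↦ by rw [count]; push_cast; rfl).2 ?_
  obtain ⟨b, rfl⟩ : ∃ b, n = r + 1 + b + k := ⟨n - r - k - 1, by omega⟩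
  rw [filter_congr fun S hS ↦ (and_congr (Aexc_eq_iff hs hS (by omega))
      (Bprec_eq_iff hr hS)).trans and_comm,
    card_filter_powersetCard_Icc_mem_notMem (by omega) (by omega) (by omega)]
  have below : r + i + 1 - 1 = r + i := by omega
  have between : m + (r + 1 + b + k) - s - k - (r + i + 1) - 1 =
      m + (r + 1 + b + k) - s - r - i - k - 2 := by omega
  have above : m + (r + 1 + b + k) - (m + (r + 1 + b + k) - s - k) = s + k := by omega
  have size : r + 1 + b + k - r - k - 1 = b := by omega
  rw [below, between, above, size, ← Nat.choose_symm_add (a := s)]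
  ring
end

section
/- Let 0 ≤ s < m and 0 ≤ r < n be integers and let S be any n-element subset of {1,…,m+n}. If Y_{(r+1)} < X_{(m−s)}, then B_r(S) ≤ m−s−1 and A_s(S) ≤ n−r−1; while if Y_{(r+1)} > X_{(m−s)}, then B_r(S) ≥ m−s and A_s(S) ≥ n−r. Consequently (since Y_{(r+1)} ≠ X_{(m−s)} always), for every n-element subset S the pair (A_s(S), B_r(S)) lies either in the rectangle {0,…,n−r−1} × {0,…,m−s−1} or in the rectangle {n−r,…,n} × {m−s,…,m}, and no other values occur. -/
open Finset

/-!
The two statistics detect the same event. At least `j` elements of a finite set lie below `t`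
exactly when its `j`-th smallest element does, so `m - s ≤ B_r` says `X_{(m-s)} < Y_{(r+1)}`.
Passing to complements inside `S`, `n - r ≤ A_s` says that at most `r` elements of `S` are
`≤ X_{(m-s)}`, which is again `X_{(m-s)} < Y_{(r+1)}`.
-/

lemma lt_count_iff_nth_lt {p : ℕ → Prop} [DecidablePred p] {i t : ℕ}
    (hi : ∀ hf : (Set.ofPred p).Finite, i < #hf.toFinset) :
    i < Nat.count p t ↔ Nat.nth p i < t := by
  refine ⟨Nat.nth_lt_of_lt_count, fun hlt => ?_⟩
  calc i = Nat.count p (Nat.nth p i) := (Nat.count_nth hi).symm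
    _ < Nat.count p t := Nat.count_strict_mono (Nat.nth_mem i hi) hlt

section NthSmallest

variable {T : Finset ℕ} {j r t : ℕ}

lemma nthSmallest_eq_nth (T : Finset ℕ) (j : ℕ) :
    nthSmallest T j = Nat.nth (· ∈ T) (j - 1) := by
  have hfin : (Set.ofPred (· ∈ T)).Finite := T.finite_toSet
  have htoFinset : hfin.toFinset = T := T.finite_toSet_toFinset
  rw [Nat.nth_eq_getD_sort hfin, htoFinset, nthSmallest]

lemma card_filter_lt_eq_count (T : Finset ℕ) (t : ℕ) :
    #{x ∈ T | x < t} = Nat.count (· ∈ T) t := by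
  rw [Nat.count_eq_card_filter_range]
  congr 1
  ext x
  simp only [mem_filter, mem_range, and_comm]

lemma lt_card_toFinset_of_lt_card (h : j < #T) (hf : (Set.ofPred (· ∈ T)).Finite) :
    j < #hf.toFinset :=
  h.trans_eq (congrArg card T.finite_toSet_toFinset.symm)

lemma nthSmallest_mem (hj : 1 ≤ j) (hjT : j ≤ #T) : nthSmallest T j ∈ T := by
  rw [nthSmallest_eq_nth]
  exact Nat.nth_mem _ (lt_card_toFinset_of_lt_card (by omega))

lemma le_card_filter_lt_iff (hj : 1 ≤ j) (hjT : j ≤ #T) :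
    j ≤ #{x ∈ T | x < t} ↔ nthSmallest T j < t := by
  rw [card_filter_lt_eq_count, nthSmallest_eq_nth,
    ← lt_count_iff_nth_lt (lt_card_toFinset_of_lt_card (by omega))]
  omega

lemma card_sub_le_card_filter_gt_iff (hr : r < #T) :
    #T - r ≤ #{x ∈ T | t < x} ↔ t < nthSmallest T (r + 1) := by
  have hsplit : #{x ∈ T | x < t + 1} + #{x ∈ T | t < x} = #T := by
    simpa only [Nat.lt_succ_iff, not_le] using
      card_filter_add_card_filter_not (s := T) (fun x => x < t + 1)
  have hlow : r + 1 ≤ #{x ∈ T | x < t + 1} ↔ nthSmallest T (r + 1) < t + 1 :=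
    le_card_filter_lt_iff (by omega) hr
  omega

end NthSmallest

/-- Relation (8) of the paper: the possible values of the pair `(A_s, B_r)` for any
`n`-element subset `S` of `{1,…,m+n}`. -/
theorem sidak_AB_range (m n s r : ℕ) (hs : s < m) (hr : r < n) (S : Finset ℕ)
    (hS : S ∈ (Finset.Icc 1 (m + n)).powersetCard n) :
    (nthSmallest S (r + 1) < nthSmallest (Finset.Icc 1 (m + n) \ S) (m - s) →
      Bprec m n r S ≤ m - s - 1 ∧ Aexc m n s S ≤ n - r - 1) ∧
    (nthSmallest (Finset.Icc 1 (m + n) \ S) (m - s) < nthSmallest S (r + 1) →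
      m - s ≤ Bprec m n r S ∧ n - r ≤ Aexc m n s S) ∧
    nthSmallest S (r + 1) ≠ nthSmallest (Finset.Icc 1 (m + n) \ S) (m - s) ∧
    ((Aexc m n s S ≤ n - r - 1 ∧ Bprec m n r S ≤ m - s - 1) ∨
      (n - r ≤ Aexc m n s S ∧ Aexc m n s S ≤ n ∧
        m - s ≤ Bprec m n r S ∧ Bprec m n r S ≤ m)) := by
  obtain ⟨hsub, hcardY⟩ := Finset.mem_powersetCard.1 hS
  have hcardX : #(Icc 1 (m + n) \ S) = m := by
    rw [card_sdiff_of_subset hsub, hcardY, Nat.card_Icc]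
    omega
  have hB : m - s ≤ Bprec m n r S ↔
      nthSmallest (Icc 1 (m + n) \ S) (m - s) < nthSmallest S (r + 1) :=
    le_card_filter_lt_iff (by omega) (by omega)
  have hA : n - r ≤ Aexc m n s S ↔
      nthSmallest (Icc 1 (m + n) \ S) (m - s) < nthSmallest S (r + 1) := by
    simpa only [Aexc, hcardY] using card_sub_le_card_filter_gt_iff (hr.trans_eq hcardY.symm)
  have hBle : Bprec m n r S ≤ m := (card_filter_le _ _).trans_eq hcardX
  have hAle : Aexc m n s S ≤ n := (card_filter_le _ _).trans_eq hcardY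
  have hne : nthSmallest S (r + 1) ≠ nthSmallest (Icc 1 (m + n) \ S) (m - s) :=
    disjoint_iff_ne.1 disjoint_sdiff _ (nthSmallest_mem (by omega) (by omega))
      _ (nthSmallest_mem (by omega) (by omega))
  refine ⟨fun hYX => by omega, fun hXY => ⟨hB.2 hXY, hA.2 hXY⟩, hne, ?_⟩
  rcases hne.lt_or_gt with hYX | hXY
  · left; omega
  · exact .inr ⟨hA.2 hXY, hAle, hB.2 hXY, hBle⟩
end
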